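/- Let k be a field, n ≥ 1, 0 ≤ r ≤ n, and e = diag(1,0) ∈ M₂(k). Then: (a) every k-subspace E ⊆ Hⁿ with dim_k E = 4r that satisfies E·λ ⊆ E for all λ ∈ H is a free right submodule of rank r; (b) the assignment E ↦ E ∩ (M₂(k)·e)ⁿ is a bijection from the set of all such subspaces E onto the set of 2r-dimensional k-subspaces of the 2n-dimensional space (M₂(k)·e)ⁿ = {(x_t) ∈ Hⁿ : each x_t lies in M₂(k)·e}. -/

import Mathlib

/-!
Right multiplication by the matrix unit with entry `(j, 0)` moves the `j`-th column of every
component into the first column and kills the rest. Hence `x ∈ Hⁿ` amounts to the pair of its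
columns, both viewed inside `P = (M₂(k)·e)ⁿ`, and a right-stable subspace `E` is exactly the set
`ofCols F` of those `x` whose two columns lie in `F = E ⊓ P` (`eq_ofCols`). Conversely, for any
`F ≤ P` the subspace `ofCols F` is right-stable and meets `P` in `F` (`ofCols_stable`,
`ofCols_inf`), so the assignment is bijective; and `ofCols F ≃ F × F` gives the dimensions.

For freeness, group a basis of the `2r`-dimensional space `F` into `r` pairs and let `v t` be the
element whose two columns are the `t`-th pair. The coordinates of the `j`-th column of
`Σ_t v_t·λ_t` in this basis are the entries of the `j`-th columns of the `λ_t`, so `genMap v` is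
injective, and its image fills `E` because both have dimension `4r`.
-/

open Matrix

/-- 2×2 matrices over `k`: the split quaternions. -/
abbrev M2 (k : Type*) [Field k] := Matrix (Fin 2) (Fin 2) k

variable {k : Type*} [Field k] {n c : ℕ}

/-- The `k`-linear map `(λ_t) ↦ Σ_t v_t·λ_t` from `H^c` to `H^n`. -/
def genMap (v : Fin c → Fin n → M2 k) : (Fin c → M2 k) →ₗ[k] (Fin n → M2 k) where
  toFun lam := fun i => ∑ t, v t i * lam t
  map_add' a b := by
    funext i
    simp [mul_add, Finset.sum_add_distrib]
  map_smul' r a := by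
    funext i
    simp [Matrix.mul_smul, Finset.smul_sum]

/-- `E ⊆ H^n` is a free right submodule of rank `r` if it is the image of an injective
map `(λ_t) ↦ Σ_t v_t·λ_t`. -/
def IsFreeRank (r : ℕ) (E : Submodule k (Fin n → M2 k)) : Prop :=
  ∃ v : Fin r → Fin n → M2 k,
    Function.Injective (genMap v) ∧ LinearMap.range (genMap v) = E

/-- The idempotent `e = diag(1,0)`. -/
def eMat (k : Type*) [Field k] : M2 k := !![1, 0; 0, 0]

/-- `M₂(k)·e`, the left ideal generated by `e`, as a `k`-subspace. -/
def ReSub (k : Type*) [Field k] : Submodule k (M2 k) :=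
  LinearMap.range (LinearMap.mulRight k (eMat k))

/-- `(M₂(k)·e)ⁿ ⊆ Hⁿ`. -/
def PnSub (k : Type*) [Field k] (n : ℕ) : Submodule k (Fin n → M2 k) :=
  Submodule.pi Set.univ (fun _ => ReSub k)

/-- The `j`-th column of `x ∈ Hⁿ`, placed in the first column: right multiplication by the matrix
unit with entry `(j, 0)`. -/
def colMap (k : Type*) [Field k] (n : ℕ) (j : Fin 2) : (Fin n → M2 k) →ₗ[k] (Fin n → M2 k) where
  toFun x := fun t => x t * Matrix.single j 0 1
  map_add' x y := by
    funext t
    simp [add_mul]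
  map_smul' c x := by
    funext t
    simp

lemma colMap_entry_zero (j : Fin 2) (x : Fin n → M2 k) (t : Fin n) (i : Fin 2) :
    colMap k n j x t i 0 = x t i j := by
  simp [colMap]

lemma colMap_entry_one (j : Fin 2) (x : Fin n → M2 k) (t : Fin n) (i : Fin 2) :
    colMap k n j x t i 1 = 0 := by
  simp [colMap]

lemma mem_PnSub {x : Fin n → M2 k} : x ∈ PnSub k n ↔ ∀ t i, x t i 1 = 0 := by
  simp only [PnSub, Submodule.mem_pi, Set.mem_univ, true_imp_iff, ReSub, LinearMap.mem_range,
    LinearMap.mulRight_apply]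
  refine forall_congr' fun t => ⟨?_, fun h => ⟨x t, ?_⟩⟩
  · rintro ⟨y, hy⟩ i
    rw [← hy]
    simp [eMat, Matrix.mul_apply, Fin.sum_univ_two]
  · ext i j
    fin_cases j
    · simp [eMat, Matrix.mul_apply, Fin.sum_univ_two]
    · simp [eMat, Matrix.mul_apply, Fin.sum_univ_two, h]

lemma ext_cols {x y : Fin n → M2 k} (h : ∀ j, colMap k n j x = colMap k n j y) : x = y := by
  funext t
  ext i j
  rw [← colMap_entry_zero j x, h, colMap_entry_zero]

lemma colMap_mem_PnSub (j : Fin 2) (x : Fin n → M2 k) : colMap k n j x ∈ PnSub k n :=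
  mem_PnSub.2 fun t i => colMap_entry_one j x t i

lemma colMap_zero_of_mem {x : Fin n → M2 k} (hx : x ∈ PnSub k n) : colMap k n 0 x = x := by
  funext t
  ext i j
  fin_cases j
  · exact colMap_entry_zero _ _ _ _
  · exact (colMap_entry_one _ _ _ _).trans (mem_PnSub.1 hx t i).symm

lemma colMap_one_of_mem {x : Fin n → M2 k} (hx : x ∈ PnSub k n) : colMap k n 1 x = 0 := by
  funext t
  ext i j
  fin_cases j
  · exact (colMap_entry_zero _ _ _ _).trans (mem_PnSub.1 hx t i)
  · exact colMap_entry_one _ _ _ _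

/-- The element of `Hⁿ` whose `j`-th column is the first column of `a j`. -/
def joinCols (a : Fin 2 → Fin n → M2 k) : Fin n → M2 k :=
  fun t => Matrix.of fun i j => a j t i 0

lemma colMap_joinCols {a : Fin 2 → Fin n → M2 k} (j : Fin 2) (ha : a j ∈ PnSub k n) :
    colMap k n j (joinCols a) = a j := by
  funext t
  ext i l
  fin_cases l
  · exact colMap_entry_zero _ _ _ _
  · exact (colMap_entry_one _ _ _ _).trans (mem_PnSub.1 ha t i).symm

lemma colMap_mul (j : Fin 2) (x : Fin n → M2 k) (l : M2 k) :
    colMap k n j (fun t => x t * l) = ∑ i, l i j • colMap k n i x := by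
  funext t
  ext a b
  fin_cases b <;>
    simp [Fin.sum_univ_two, colMap_entry_zero, colMap_entry_one, Matrix.mul_apply, mul_comm]

/-- The elements of `Hⁿ` all of whose columns lie in `F`. -/
def ofCols (F : Submodule k (Fin n → M2 k)) : Submodule k (Fin n → M2 k) :=
  ⨅ j, F.comap (colMap k n j)

lemma mem_ofCols {F : Submodule k (Fin n → M2 k)} {x : Fin n → M2 k} :
    x ∈ ofCols F ↔ ∀ j, colMap k n j x ∈ F := by
  simp [ofCols, Submodule.mem_iInf]

lemma ofCols_stable (F : Submodule k (Fin n → M2 k)) :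
    ∀ x ∈ ofCols F, ∀ lam : M2 k, (fun t => x t * lam) ∈ ofCols F := by
  intro x hx l
  refine mem_ofCols.2 fun j => ?_
  rw [colMap_mul]
  exact F.sum_mem fun i _ => F.smul_mem _ (mem_ofCols.1 hx i)

lemma ofCols_inf {F : Submodule k (Fin n → M2 k)} (hF : F ≤ PnSub k n) :
    ofCols F ⊓ PnSub k n = F := by
  ext x
  rw [Submodule.mem_inf, mem_ofCols, Fin.forall_fin_two]
  constructor
  · rintro ⟨⟨h, -⟩, hx⟩
    rwa [colMap_zero_of_mem hx] at h
  · intro hx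
    rw [colMap_zero_of_mem (hF hx), colMap_one_of_mem (hF hx)]
    exact ⟨⟨hx, F.zero_mem⟩, hF hx⟩

lemma eq_ofCols {E : Submodule k (Fin n → M2 k)}
    (hE : ∀ x ∈ E, ∀ lam : M2 k, (fun t => x t * lam) ∈ E) :
    ofCols (E ⊓ PnSub k n) = E := by
  ext x
  rw [mem_ofCols]
  refine ⟨fun h => ?_, fun hx j => ⟨hE x hx _, colMap_mem_PnSub j x⟩⟩
  -- `x` is recovered from its columns: right multiplication by the matrix unit with entry
  -- `(0, j)` puts the `j`-th column back in place.
  have key : x = ∑ j, fun t => colMap k n j x t * Matrix.single 0 j 1 := by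
    funext t
    ext a b
    fin_cases b <;> simp [Fin.sum_univ_two, Matrix.mul_apply, colMap_entry_zero, colMap_entry_one]
  rw [key]
  exact E.sum_mem fun j _ => hE _ (h j).1 _

/-- An element with columns in `F ≤ P` is the same as a pair of elements of `F`. -/
def ofColsEquiv {F : Submodule k (Fin n → M2 k)} (hF : F ≤ PnSub k n) :
    ofCols F ≃ₗ[k] (Fin 2 → F) where
  toFun x := fun j => ⟨colMap k n j x, mem_ofCols.1 x.2 j⟩
  map_add' x y := by
    ext1 j
    simp
  map_smul' c x := by
    ext1 j
    simp
  invFun a := ⟨joinCols fun j => a j, mem_ofCols.2 fun j => by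
    rw [colMap_joinCols j (hF (a j).2)]
    exact (a j).2⟩
  left_inv x := Subtype.ext <| ext_cols fun j =>
    colMap_joinCols (a := fun j => colMap k n j (x : Fin n → M2 k)) j
      (colMap_mem_PnSub j (x : Fin n → M2 k))
  right_inv a := by
    ext1 j
    exact Subtype.ext (colMap_joinCols (a := fun j => (a j : Fin n → M2 k)) j (hF (a j).2))

lemma finrank_ofCols {F : Submodule k (Fin n → M2 k)} (hF : F ≤ PnSub k n) :
    Module.finrank k (ofCols F) = 2 * Module.finrank k F := by
  rw [(ofColsEquiv hF).finrank_eq, Module.finrank_pi_fintype]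
  simp

lemma finrank_inf {r : ℕ} {E : Submodule k (Fin n → M2 k)} (hd : Module.finrank k E = 4 * r)
    (hE : ∀ x ∈ E, ∀ lam : M2 k, (fun t => x t * lam) ∈ E) :
    Module.finrank k ↥(E ⊓ PnSub k n) = 2 * r := by
  have h := finrank_ofCols (inf_le_right : E ⊓ PnSub k n ≤ PnSub k n)
  rw [eq_ofCols hE] at h
  omega

lemma isFreeRank_ofCols {r : ℕ} {F : Submodule k (Fin n → M2 k)} (hF : F ≤ PnSub k n)
    (hd : Module.finrank k F = 2 * r) : IsFreeRank r (ofCols F) := by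
  let b : Module.Basis (Fin r × Fin 2) k F :=
    (Module.finBasisOfFinrankEq k F (hd.trans (mul_comm 2 r))).reindex finProdFinEquiv.symm
  let v : Fin r → Fin n → M2 k := fun t => joinCols fun i => (b (t, i) : Fin n → M2 k)
  have hcol : ∀ t i, colMap k n i (v t) = b (t, i) := fun t i =>
    colMap_joinCols (a := fun i => (b (t, i) : Fin n → M2 k)) i (hF (b (t, i)).2)
  have hgen : ∀ lam, genMap v lam = ∑ t, fun i => v t i * lam t := by
    intro lam
    funext i
    simp [genMap]
  have hcomb : ∀ lam j, colMap k n j (genMap v lam) =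
      ((∑ p : Fin r × Fin 2, lam p.1 p.2 j • b p : F) : Fin n → M2 k) := by
    intro lam j
    rw [hgen, map_sum]
    simp only [colMap_mul, hcol, Fintype.sum_prod_type, Submodule.coe_sum, Submodule.coe_smul]
  have hinj : Function.Injective (genMap v) := by
    rw [injective_iff_map_eq_zero]
    intro lam h
    funext t
    ext i j
    have h0 := hcomb lam j
    rw [h, map_zero] at h0
    have h1 : ∑ p : Fin r × Fin 2, lam p.1 p.2 j • b p = 0 := Subtype.ext h0.symm
    exact Fintype.linearIndependent_iff.1 b.linearIndependent _ h1 (t, i)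
  refine ⟨v, hinj, Submodule.eq_of_le_of_finrank_eq ?_ ?_⟩
  · rintro _ ⟨lam, rfl⟩
    refine mem_ofCols.2 fun j => ?_
    rw [hcomb]
    exact Subtype.coe_prop _
  · rw [LinearMap.finrank_range_of_inj hinj, finrank_ofCols hF, hd, Module.finrank_pi_fintype]
    simp [Module.finrank_matrix]
    ring

theorem stmt9 (k : Type*) [Field k] (n r : ℕ) (hn : 1 ≤ n) (hr : r ≤ n) :
    (∀ E : Submodule k (Fin n → M2 k),
      Module.finrank k ↥E = 4 * r →
      (∀ x ∈ E, ∀ lam : M2 k, (fun t => x t * lam) ∈ E) →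
      IsFreeRank r E) ∧
    Set.BijOn (fun E : Submodule k (Fin n → M2 k) => E ⊓ PnSub k n)
      {E : Submodule k (Fin n → M2 k) |
        Module.finrank k ↥E = 4 * r ∧ ∀ x ∈ E, ∀ lam : M2 k, (fun t => x t * lam) ∈ E}
      {F : Submodule k (Fin n → M2 k) | F ≤ PnSub k n ∧ Module.finrank k ↥F = 2 * r} := by
  refine ⟨fun E hd hE => ?_, fun E hE => ⟨inf_le_right, finrank_inf hE.1 hE.2⟩, ?_, ?_⟩
  · rw [← eq_ofCols hE]
    exact isFreeRank_ofCols inf_le_right (finrank_inf hd hE)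
  · intro E hE E' hE' h
    rw [← eq_ofCols hE.2, ← eq_ofCols hE'.2]
    exact congrArg ofCols h
  · rintro F ⟨hF, hd⟩
    refine ⟨ofCols F, ⟨?_, ofCols_stable F⟩, ofCols_inf hF⟩
    rw [finrank_ofCols hF, hd]
    ring
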